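/- Let g : ℤ → ℝ be bounded with δ(g) > 0. Then H_g does not have SULE: there is no complete orthonormal set {φ_s} of eigenfunctions of H_g in ℓ²(ℤ), points n_s ∈ ℤ, and γ > 0 such that for every ε > 0 there is a constant C_ε with |φ_s(n)| ≤ C_ε·e^{ε|n_s|}·e^{−γ|n−n_s|} for all s and all n ∈ ℤ. -/

import Mathlib

noncomputable section

open Filter Real

def distToInt (x : ℝ) : ℝ := |x - round x|

def IsDiophantine (α : ℝ) : Prop :=
  ∃ κ τ : ℝ, 0 < κ ∧ 0 < τ ∧ ∀ k : ℤ, k ≠ 0 → τ / |(k : ℝ)| ^ κ ≤ distToInt (k * α)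

def deltaPhase (α θ : ℝ) : ℝ :=
  limsup (fun n : ℤ => -Real.log (distToInt (2 * θ + n * α)) / |(n : ℝ)|) cofinite

def amoPot (lam α θ : ℝ) : ℤ → ℝ := fun n => 2 * lam * Real.cos (2 * Real.pi * (θ + n * α))

def IsEigenfunction (g : ℤ → ℝ) (E : ℝ) (φ : ℤ → ℝ) : Prop :=
  ∀ n : ℤ, φ (n + 1) + φ (n - 1) + g n * φ n = E * φ n

def deltaPot (g : ℤ → ℝ) : ℝ :=
  limsup (fun n : ℤ => -Real.log (⨆ m : ℤ, |g (n - m) - g m|) / |(n : ℝ)|) cofinite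

def matNorm (M : Matrix (Fin 2) (Fin 2) ℝ) : ℝ := ⨆ p : Fin 2 × Fin 2, |M p.1 p.2|

def transfer (g : ℤ → ℝ) (E : ℝ) : ℕ → ℤ → Matrix (Fin 2) (Fin 2) ℝ
  | 0, _ => 1
  | n + 1, k => !![E - g (k + n), -1; 1, 0] * transfer g E n k

def LyapSup (g : ℤ → ℝ) (E : ℝ) : ℝ :=
  limsup (fun n : ℕ => ⨆ k : ℤ, Real.log (matNorm (transfer g E n k)) / n) atTop

def HasSULE (g : ℤ → ℝ) : Prop :=
  ∃ (Φ : HilbertBasis ℕ ℝ (lp (fun _ : ℤ => ℝ) 2)) (ns : ℕ → ℤ) (γ : ℝ),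
    0 < γ ∧
    (∀ s : ℕ, ∃ E : ℝ, IsEigenfunction g E (fun n => Φ s n)) ∧
    ∀ ε : ℝ, 0 < ε → ∃ C : ℝ,
      ∀ (s : ℕ) (n : ℤ),
        |Φ s n| ≤ C * Real.exp (ε * |(ns s : ℝ)|) * Real.exp (-γ * |(n : ℝ) - (ns s : ℝ)|)

lemma aux_summable_exp (a : ℝ) (ha : 0 < a) : Summable (fun n : ℤ => Real.exp (-a * |(n : ℝ)|)) := by
  have h : Summable (fun n : ℕ => Real.exp (-a * (n : ℝ))) := by
    have := Real.summable_exp_nat_mul_iff (a := -a)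
    simpa [mul_comm] using this.2 (by linarith)
  apply Summable.of_nat_of_neg
  · simpa using h
  · simpa using h

lemma aux_lower (f : ℕ → ℤ → ℝ) (hcol : ∀ p, HasSum (fun s => f s p ^ 2) 1)
    (hrow : ∀ s, HasSum (fun n => f s n ^ 2) 1) (p : ℤ) (A D a : ℝ) (ha : 0 < a)
    (hA0 : 0 ≤ A) (hD0 : 0 ≤ D) (hA : ∀ s, |f s p| ≤ A)
    (hD : ∀ s n, |f s p| * |f s n| ≤ D * Real.exp (-(2 * a) * |(n : ℝ) - p|)) :
    1 ≤ Real.sqrt (A * D) * ∑' n : ℤ, Real.exp (-a * |(n : ℝ)|) := by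
  have hT := aux_summable_exp a ha
  have hT' : HasSum (fun n : ℤ => Real.exp (-a * |(n : ℝ) - p|))
      (∑' n : ℤ, Real.exp (-a * |(n : ℝ)|)) := by
    have := (Equiv.subRight p).hasSum_iff.2 hT.hasSum
    convert this using 2 with n
    simp
  have h1 : ∀ s n, |f s n| ≤ 1 := by
    intro s n
    have := le_hasSum (hrow s) n (fun j _ => sq_nonneg _)
    exact (sq_le_one_iff_abs_le_one _).1 this
  refine hasSum_le_of_sum_le (hcol p) (fun S => ?_)
  have hb : ∀ q, ∑ s ∈ S, f s q ^ 2 ≤ 1 := fun q =>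
    sum_le_hasSum S (fun i _ => sq_nonneg _) (hcol q)
  have hS : HasSum (fun n => ∑ s ∈ S, f s p ^ 2 * f s n ^ 2) (∑ s ∈ S, f s p ^ 2) := by
    apply hasSum_sum
    intro s _
    simpa using (hrow s).mul_left (f s p ^ 2)
  refine hasSum_le (fun n => ?_) hS (hT'.mul_left _)
  have hprod : ∑ s ∈ S, |f s p| * |f s n| ≤ 1 := by
    have : ∑ s ∈ S, |f s p| * |f s n| ≤ ∑ s ∈ S, (f s p ^ 2 + f s n ^ 2) / 2 := by
      apply Finset.sum_le_sum
      intro s _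
      have := two_mul_le_add_sq |f s p| |f s n|
      rw [sq_abs, sq_abs] at this
      linarith
    rw [← Finset.sum_div, Finset.sum_add_distrib] at this
    linarith [hb p, hb n]
  set R := Real.sqrt (A * D) * Real.exp (-a * |(n : ℝ) - p|) with hR
  have hR0 : 0 ≤ R := by positivity
  have key : ∀ s, |f s p| * |f s n| ≤ R := by
    intro s
    refine (sq_le_sq₀ (by positivity) hR0).1 ?_
    have e1 : R ^ 2 = A * (D * Real.exp (-(2 * a) * |(n : ℝ) - p|)) := by
      rw [hR, mul_pow, Real.sq_sqrt (by positivity), ← Real.exp_nat_mul]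
      rw [mul_assoc]
      congr 3
      push_cast
      ring
    rw [e1, sq]
    apply mul_le_mul _ (hD s n) (by positivity) hA0
    calc |f s p| * |f s n| ≤ A * 1 := mul_le_mul (hA s) (h1 s n) (abs_nonneg _) hA0
      _ = A := mul_one _
  calc ∑ s ∈ S, f s p ^ 2 * f s n ^ 2 ≤ ∑ s ∈ S, R * (|f s p| * |f s n|) := by
        apply Finset.sum_le_sum
        intro s _
        have : f s p ^ 2 * f s n ^ 2 = (|f s p| * |f s n|) * (|f s p| * |f s n|) := by
          rw [← sq_abs (f s p), ← sq_abs (f s n)]; ring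
        rw [this]
        exact mul_le_mul_of_nonneg_right (key s) (by positivity)
    _ = R * ∑ s ∈ S, |f s p| * |f s n| := by rw [Finset.mul_sum]
    _ ≤ R * 1 := mul_le_mul_of_nonneg_left hprod hR0
    _ = R := mul_one R

lemma aux_energy (g : ℤ → ℝ) (M : ℝ) (hM : ∀ n, |g n| ≤ M) (E : ℝ) (φ : ℤ → ℝ)
    (hE : IsEigenfunction g E φ) (hs : HasSum (fun n => φ n ^ 2) 1) : |E| ≤ M + 4 := by
  have h1 : ∀ n, |φ n| ≤ 1 := by
    intro n
    have := le_hasSum hs n (fun j _ => sq_nonneg _)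
    exact (sq_le_one_iff_abs_le_one _).1 this
  have hbdd : BddAbove (Set.range fun n => |φ n|) := ⟨1, by rintro _ ⟨n, rfl⟩; exact h1 n⟩
  set X := ⨆ n, |φ n| with hX
  have hle : ∀ n, |φ n| ≤ X := fun n => le_ciSup hbdd n
  have hX0 : 0 < X := by
    by_contra hcon
    have hz : ∀ n, φ n = 0 := fun n => abs_eq_zero.1 (le_antisymm ((hle n).trans (not_lt.1 hcon)) (abs_nonneg _))
    have h0 : HasSum (fun n => φ n ^ 2) 0 := by simp [hz]
    have := hs.unique h0
    norm_num at this
  obtain ⟨n, hn⟩ := exists_lt_of_lt_ciSup (show X / 2 < ⨆ n, |φ n| by rw [← hX]; linarith)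
  have e : (E - g n) * φ n = φ (n + 1) + φ (n - 1) := by linarith [hE n]
  have h2 : |E - g n| * |φ n| ≤ 2 * X := by
    rw [← abs_mul, e]
    exact (abs_add_le _ _).trans (by linarith [hle (n + 1), hle (n - 1)])
  have h3 : |E - g n| ≤ 4 := by
    by_contra hcon
    push Not at hcon
    nlinarith
  calc |E| = |(E - g n) + g n| := by ring_nf
    _ ≤ _ := abs_add_le _ _
    _ ≤ _ := by linarith [hM n]

lemma aux_wronskian (g : ℤ → ℝ) (E : ℝ) (φ : ℤ → ℝ)
    (hE : IsEigenfunction g E φ) (hs : HasSum (fun n => φ n ^ 2) 1) (N : ℤ) (η : ℝ)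
    (hη : ∀ m, |g (N - m) - g m| ≤ η) (n : ℤ) :
    |φ (n + 1) * φ (N - n) - φ n * φ (N - (n + 1))| ≤ η := by
  have hη0 : 0 ≤ η := (abs_nonneg _).trans (hη 0)
  set W : ℤ → ℝ := fun n => φ (n + 1) * φ (N - n) - φ n * φ (N - (n + 1)) with hW
  have hstep : ∀ n, W (n + 1) - W n = (g (N - (n + 1)) - g (n + 1)) * (φ (n + 1) * φ (N - (n + 1))) := by
    intro n
    have a1 := hE (n + 1)
    have a2 := hE (N - (n + 1))
    simp only [hW]
    rw [show n + 1 - 1 = n by ring] at a1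
    rw [show N - (n + 1) + 1 = N - n by ring, show N - (n + 1) - 1 = N - (n + 1 + 1) by ring] at a2
    linear_combination φ (N - (n + 1)) * a1 - φ (n + 1) * a2
  have hs2 : HasSum (fun n => φ (N - n) ^ 2) 1 := (Equiv.subLeft N).hasSum_iff.2 hs
  have hsum : ∀ k : ℕ, |W n| ≤ |W (n + k)| + η * ∑ i ∈ Finset.range k, |φ (n + 1 + i) * φ (N - (n + 1 + i))| := by
    intro k
    induction k with
    | zero => simp
    | succ k ih =>
      rw [Finset.sum_range_succ]
      have h := hstep (n + k)
      have h5 : |W (n + k)| ≤ |W (n + k + 1)| + |W (n + k + 1) - W (n + k)| := by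
        have := abs_sub_abs_le_abs_sub (W (n + k)) (W (n + k + 1))
        rw [abs_sub_comm (W (n + k)) (W (n + k + 1))] at this
        linarith
      rw [h, abs_mul] at h5
      have h6 := mul_le_mul_of_nonneg_right (hη (n + k + 1)) (abs_nonneg (φ (n + k + 1) * φ (N - (n + k + 1))))
      have e1 : n + 1 + (k : ℤ) = n + k + 1 := by ring
      have e2 : n + ((k + 1 : ℕ) : ℤ) = n + k + 1 := by push_cast; ring
      rw [e1, e2]
      linarith
  have hle1 : ∀ k : ℕ, ∑ i ∈ Finset.range k, |φ (n + 1 + i) * φ (N - (n + 1 + i))| ≤ 1 := by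
    intro k
    let e : ℕ ↪ ℤ := ⟨fun i => n + 1 + i, fun i j h => by simpa using h⟩
    have hA := sum_le_hasSum ((Finset.range k).map e) (fun i _ => sq_nonneg _) hs
    have hB := sum_le_hasSum ((Finset.range k).map e) (fun i _ => sq_nonneg _) hs2
    rw [Finset.sum_map] at hA hB
    have : ∑ i ∈ Finset.range k, |φ (n + 1 + i) * φ (N - (n + 1 + i))| ≤
        ∑ i ∈ Finset.range k, (φ (e i) ^ 2 + φ (N - e i) ^ 2) / 2 := by
      apply Finset.sum_le_sum
      intro i _
      have := two_mul_le_add_sq |φ (n + 1 + i)| |φ (N - (n + 1 + i))|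
      rw [sq_abs, sq_abs] at this
      rw [abs_mul]
      show _ ≤ (φ (n + 1 + i) ^ 2 + φ (N - (n + 1 + i)) ^ 2) / 2
      linarith
    rw [← Finset.sum_div, Finset.sum_add_distrib] at this
    linarith
  have hlim0 : Tendsto φ cofinite (nhds 0) := by
    have := hs.summable.tendsto_cofinite_zero
    have h2 := (Real.continuous_sqrt.tendsto 0).comp this
    simp only [Real.sqrt_zero] at h2
    rw [tendsto_zero_iff_abs_tendsto_zero]
    refine h2.congr (fun x => ?_)
    simp [Real.sqrt_sq_eq_abs]
  have hin : ∀ j : ℤ, Tendsto (fun k : ℕ => φ (j + k)) atTop (nhds 0) := by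
    intro j
    rw [← Nat.cofinite_eq_atTop]
    exact hlim0.comp (Function.Injective.tendsto_cofinite (fun a b h => by simpa using h))
  have hin2 : ∀ j : ℤ, Tendsto (fun k : ℕ => φ (j - k)) atTop (nhds 0) := by
    intro j
    rw [← Nat.cofinite_eq_atTop]
    exact hlim0.comp (Function.Injective.tendsto_cofinite (fun a b h => by simpa using h))
  have hWlim : Tendsto (fun k : ℕ => |W (n + k)| + η) atTop (nhds η) := by
    have h := ((hin (n + 1)).mul (hin2 (N - n))).sub ((hin n).mul (hin2 (N - (n + 1))))
    have h2 := (h.abs).add_const η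
    simp only [mul_zero, sub_zero, abs_zero, zero_add] at h2
    refine h2.congr (fun k => ?_)
    simp only [hW]
    rw [show n + 1 + (k : ℤ) = n + k + 1 by ring, show N - n - (k : ℤ) = N - (n + k) by ring,
      show N - (n + 1) - (k : ℤ) = N - (n + k + 1) by ring]
  refine ge_of_tendsto' hWlim (fun k => (hsum k).trans ?_)
  have := mul_le_mul_of_nonneg_left (hle1 k) hη0
  linarith

lemma aux_small_or (x y r : ℝ) (hr : 0 ≤ r) (h : |x * y| ≤ r ^ 2) : |x| ≤ r ∨ |y| ≤ r := by
  by_contra hcon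
  push Not at hcon
  rw [abs_mul] at h
  nlinarith [hcon.1, hcon.2]

lemma aux_center (g : ℤ → ℝ) (M : ℝ) (hM : ∀ n, |g n| ≤ M) (E : ℝ) (φ : ℤ → ℝ)
    (hE : IsEigenfunction g E φ) (hs : HasSum (fun n => φ n ^ 2) 1) (N : ℤ) (r : ℝ) (hr : 0 ≤ r)
    (hη : ∀ m, |g (N - m) - g m| ≤ r ^ 2) :
    ∃ σ : ℝ, |σ| = 1 ∧ |φ (N / 2) + σ * φ (N - N / 2)| ≤ (2 * M + 6) * r ∧
      |φ (N / 2 + 1) + σ * φ (N - (N / 2 + 1))| ≤ (2 * M + 6) * r := by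
  have hEb := aux_energy g M hM E φ hE hs
  have hM0 : 0 ≤ M := (abs_nonneg _).trans (hM 0)
  have hw := aux_wronskian g E φ hE hs N (r ^ 2) hη (N / 2)
  have hMr : 0 ≤ M * r := by positivity
  rcases Int.even_or_odd' N with ⟨c, hc | hc⟩
  · have e0 : N / 2 = c := by omega
    have e1 : N - c = c := by omega
    have e2 : N - (c + 1) = c - 1 := by omega
    rw [e0, e1, e2] at hw ⊢
    rw [show φ (c + 1) * φ c - φ c * φ (c - 1) = φ c * (φ (c + 1) - φ (c - 1)) by ring] at hw
    rcases aux_small_or _ _ r hr hw with h | h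
    · refine ⟨1, by simp, ?_, ?_⟩
      · rw [one_mul]
        exact (abs_add_le _ _).trans (by nlinarith)
      · have : φ (c + 1) + 1 * φ (c - 1) = (E - g c) * φ c := by linarith [hE c]
        rw [this, abs_mul]
        have h4 : |E - g c| ≤ 2 * M + 6 := (abs_sub _ _).trans (by linarith [hM c])
        exact mul_le_mul h4 h (abs_nonneg _) (by positivity)
    · refine ⟨-1, by simp, ?_, ?_⟩
      · have : φ c + -1 * φ c = 0 := by ring
        rw [this, abs_zero]; positivity
      · rw [show φ (c + 1) + -1 * φ (c - 1) = φ (c + 1) - φ (c - 1) by ring]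
        nlinarith
  · have e0 : N / 2 = c := by omega
    have e1 : N - c = c + 1 := by omega
    have e2 : N - (c + 1) = c := by omega
    rw [e0, e1, e2] at hw ⊢
    rw [show φ (c + 1) * φ (c + 1) - φ c * φ c = (φ c + φ (c + 1)) * (φ (c + 1) - φ c) by ring] at hw
    rcases aux_small_or _ _ r hr hw with h | h
    · refine ⟨1, by simp, ?_, ?_⟩
      · rw [one_mul]; nlinarith
      · rw [one_mul, add_comm]; nlinarith
    · refine ⟨-1, by simp, ?_, ?_⟩
      · rw [show φ c + -1 * φ (c + 1) = -(φ (c + 1) - φ c) by ring, abs_neg]; nlinarith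
      · rw [show φ (c + 1) + -1 * φ c = φ (c + 1) - φ c by ring]; nlinarith

lemma aux_growth (g : ℤ → ℝ) (M : ℝ) (hM : ∀ n, |g n| ≤ M) (E : ℝ) (φ : ℤ → ℝ)
    (hE : IsEigenfunction g E φ) (hs : HasSum (fun n => φ n ^ 2) 1) (N : ℤ) (r : ℝ) (hr : 0 ≤ r)
    (hr1 : r ≤ 1) (hη : ∀ m, |g (N - m) - g m| ≤ r ^ 2) :
    ∃ σ : ℝ, |σ| = 1 ∧ ∀ k : ℕ, |φ (N / 2 + k) + σ * φ (N - (N / 2 + k))| ≤ (2 * M + 6) ^ (k + 1) * r := by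
  obtain ⟨σ, hσ, h0, h1⟩ := aux_center g M hM E φ hE hs N r hr hη
  have hEb := aux_energy g M hM E φ hE hs
  have hM0 : 0 ≤ M := (abs_nonneg _).trans (hM 0)
  have hφ1 : ∀ n, |φ n| ≤ 1 := by
    intro n
    have := le_hasSum hs n (fun j _ => sq_nonneg _)
    exact (sq_le_one_iff_abs_le_one _).1 this
  refine ⟨σ, hσ, ?_⟩
  set c := N / 2
  set B := 2 * M + 6 with hB
  have hB1 : 1 ≤ B := by linarith
  set v : ℤ → ℝ := fun n => φ n + σ * φ (N - n) with hv
  have hrec : ∀ n, |v (n + 1 + 1)| ≤ (2 * M + 4) * |v (n + 1)| + |v n| + r := by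
    intro n
    have a1 := hE (n + 1)
    have a2 := hE (N - (n + 1))
    rw [show n + 1 - 1 = n by ring] at a1
    rw [show N - (n + 1) + 1 = N - n by ring, show N - (n + 1) - 1 = N - (n + 1 + 1) by ring] at a2
    have e : v (n + 1 + 1) = (E - g (n + 1)) * v (n + 1) - v n
        - (g (N - (n + 1)) - g (n + 1)) * (σ * φ (N - (n + 1))) := by
      simp only [hv]
      linear_combination a1 + σ * a2
    have b1 : |(E - g (n + 1)) * v (n + 1)| ≤ (2 * M + 4) * |v (n + 1)| := by
      rw [abs_mul]
      exact mul_le_mul_of_nonneg_right ((abs_sub _ _).trans (by linarith [hM (n + 1)])) (abs_nonneg _)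
    have b2 : |(g (N - (n + 1)) - g (n + 1)) * (σ * φ (N - (n + 1)))| ≤ r := by
      rw [abs_mul, abs_mul, hσ, one_mul]
      have := mul_le_mul (hη (n + 1)) (hφ1 (N - (n + 1))) (abs_nonneg _) (sq_nonneg r)
      nlinarith
    rw [e]
    calc _ ≤ |(E - g (n + 1)) * v (n + 1) - v n| + _ := abs_sub _ _
      _ ≤ |(E - g (n + 1)) * v (n + 1)| + |v n| + _ := by gcongr; exact abs_sub _ _
      _ ≤ _ := by linarith
  have main : ∀ k : ℕ, |v (c + k)| ≤ B ^ (k + 1) * r ∧ |v (c + k + 1)| ≤ B ^ (k + 2) * r := by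
    intro k
    induction k with
    | zero =>
      constructor
      · simpa using h0
      · have : B * r ≤ B ^ 2 * r := by
          apply mul_le_mul_of_nonneg_right _ hr
          nlinarith
        simpa using h1.trans this
    | succ k ih =>
      have e : c + ((k + 1 : ℕ) : ℤ) = c + k + 1 := by push_cast; ring
      rw [e]
      refine ⟨ih.2, ?_⟩
      have h := hrec (c + k)
      have p0 : 1 ≤ B ^ (k + 2) := one_le_pow₀ hB1
      have p1 : B ^ (k + 1) ≤ B ^ (k + 2) := pow_le_pow_right₀ hB1 (by omega)
      have q0 : r ≤ B ^ (k + 2) * r := le_mul_of_one_le_left hr p0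
      have q1 : B ^ (k + 1) * r ≤ B ^ (k + 2) * r := mul_le_mul_of_nonneg_right p1 hr
      have q2 : (2 * M + 4) * |v (c + k + 1)| ≤ (2 * M + 4) * (B ^ (k + 2) * r) :=
        mul_le_mul_of_nonneg_left ih.2 (by linarith)
      have : B ^ (k + 1 + 2) * r = (2 * M + 6) * (B ^ (k + 2) * r) := by rw [← hB]; ring
      rw [this]
      linarith [ih.1]
  exact fun k => (main k).1

lemma aux_prod (φ : ℤ → ℝ) (c : ℤ) (γ ε C : ℝ) (hε : 0 ≤ ε) (hεγ : 4 * ε ≤ γ)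
    (h : ∀ n : ℤ, |φ n| ≤ C * Real.exp (ε * |(c : ℝ)|) * Real.exp (-γ * |(n : ℝ) - c|)) (p n : ℤ) :
    |φ p| * |φ n| ≤ C ^ 2 * Real.exp (2 * ε * |(p : ℝ)|) * Real.exp (-(2 * (γ / 4)) * |(n : ℝ) - p|) := by
  have h1 := mul_le_mul (h p) (h n) (abs_nonneg _) ((abs_nonneg _).trans (h p))
  refine h1.trans ?_
  have e1 : C * Real.exp (ε * |(c : ℝ)|) * Real.exp (-γ * |(p : ℝ) - c|) *
      (C * Real.exp (ε * |(c : ℝ)|) * Real.exp (-γ * |(n : ℝ) - c|)) =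
      C ^ 2 * Real.exp (ε * |(c : ℝ)| + -γ * |(p : ℝ) - c| + ε * |(c : ℝ)| + -γ * |(n : ℝ) - c|) := by
    simp only [Real.exp_add]; ring
  have e2 : C ^ 2 * Real.exp (2 * ε * |(p : ℝ)|) * Real.exp (-(2 * (γ / 4)) * |(n : ℝ) - p|) =
      C ^ 2 * Real.exp (2 * ε * |(p : ℝ)| + -(2 * (γ / 4)) * |(n : ℝ) - p|) := by
    simp only [Real.exp_add]; ring
  rw [e1, e2]
  apply mul_le_mul_of_nonneg_left _ (sq_nonneg C)
  apply Real.exp_le_exp.2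
  have t1 : |(n : ℝ) - p| ≤ |(n : ℝ) - c| + |(p : ℝ) - c| := by
    have := abs_sub ((n : ℝ) - c) ((p : ℝ) - c)
    simpa using this
  have t2 : |(c : ℝ)| ≤ |(p : ℝ)| + |(p : ℝ) - c| := by
    have := abs_sub (p : ℝ) ((p : ℝ) - c)
    simpa using this
  have hγ : 0 ≤ γ := by linarith
  have m1 := mul_le_mul_of_nonneg_left t1 hγ
  have m2 := mul_le_mul_of_nonneg_left t2 hε
  have m3 := mul_le_mul_of_nonneg_right hεγ (abs_nonneg ((p : ℝ) - c))
  have m4 := mul_nonneg hγ (abs_nonneg ((n : ℝ) - c))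
  linarith

lemma aux_freq (g : ℤ → ℝ) (hg : ∃ M : ℝ, ∀ n : ℤ, |g n| ≤ M) (hδ : 0 < deltaPot g) :
    ∃ d : ℝ, 0 < d ∧ ∃ᶠ N : ℤ in cofinite, ∀ m, |g (N - m) - g m| ≤ Real.exp (-d * |(N : ℝ)|) := by
  obtain ⟨M, hM⟩ := hg
  refine ⟨deltaPot g / 2, by linarith, ?_⟩
  set d := deltaPot g / 2 with hd
  have hfr : ∃ᶠ n : ℤ in cofinite, d < -Real.log (⨆ m : ℤ, |g (n - m) - g m|) / |(n : ℝ)| := by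
    intro hcon
    simp only [not_lt] at hcon
    have hlim : deltaPot g = sInf {a : ℝ | ∀ᶠ n : ℤ in cofinite,
      -Real.log (⨆ m : ℤ, |g (n - m) - g m|) / |(n : ℝ)| ≤ a} := by
      rw [deltaPot, limsup_eq]
    by_cases hb : BddBelow {a : ℝ | ∀ᶠ n : ℤ in cofinite,
      -Real.log (⨆ m : ℤ, |g (n - m) - g m|) / |(n : ℝ)| ≤ a}
    · have := csInf_le hb hcon
      rw [← hlim] at this
      linarith
    · rw [Real.sInf_of_not_bddBelow hb] at hlim
      linarith
  refine hfr.mono (fun N hN m => ?_)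
  have hbdd : BddAbove (Set.range fun m : ℤ => |g (N - m) - g m|) := by
    refine ⟨2 * M, ?_⟩
    rintro _ ⟨m, rfl⟩
    exact (abs_sub _ _).trans (by linarith [hM (N - m), hM m])
  have hle := le_ciSup hbdd m
  refine hle.trans ?_
  have hN0 : 0 < |(N : ℝ)| := by
    rcases (abs_nonneg (N : ℝ)).eq_or_lt with h | h
    · rw [← h, div_zero] at hN; linarith
    · exact h
  rw [lt_div_iff₀ hN0] at hN
  have hS0 : 0 ≤ ⨆ m : ℤ, |g (N - m) - g m| := (abs_nonneg _).trans hle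
  rcases hS0.eq_or_lt with h | h
  · rw [← h]; positivity
  · rw [← Real.log_le_iff_le_exp h]
    linarith

set_option maxHeartbeats 1000000 in
lemma aux_main (g : ℤ → ℝ) (M : ℝ) (hM : ∀ n : ℤ, |g n| ≤ M)
    (d : ℝ) (hd : 0 < d)
    (hfr : ∃ᶠ N : ℤ in cofinite, ∀ m, |g (N - m) - g m| ≤ Real.exp (-d * |(N : ℝ)|))
    (f : ℕ → ℤ → ℝ) (hcol : ∀ p, HasSum (fun s => f s p ^ 2) 1)
    (hrow : ∀ s, HasSum (fun n => f s n ^ 2) 1)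
    (hE : ∀ s, ∃ E : ℝ, IsEigenfunction g E (f s)) (ns : ℕ → ℤ) (γ : ℝ) (hγ : 0 < γ)
    (hS : ∀ ε : ℝ, 0 < ε → ∃ C : ℝ, ∀ (s : ℕ) (n : ℤ),
        |f s n| ≤ C * Real.exp (ε * |(ns s : ℝ)|) * Real.exp (-γ * |(n : ℝ) - (ns s : ℝ)|)) : False := by
  have hM0 : 0 ≤ M := (abs_nonneg _).trans (hM 0)
  set B := 2 * M + 6 with hB
  have hB0 : 0 < B := by linarith
  set b := Real.log B with hb
  have hb0 : 0 < b := Real.log_pos (by linarith)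
  have hBb : B = Real.exp b := (Real.exp_log hB0).symm
  set β := min 1 (d / (4 * b)) with hβ
  have hβ0 : 0 < β := lt_min one_pos (by positivity)
  have hβ1 : β ≤ 1 := min_le_left _ _
  have hβd : b * β ≤ d / 4 := by
    have : β ≤ d / (4 * b) := min_le_right _ _
    calc b * β ≤ b * (d / (4 * b)) := mul_le_mul_of_nonneg_left this hb0.le
      _ = d / 4 := by field_simp
  set ε := min (γ * β) d / 100 with hε
  have hγβ : 0 < γ * β := by positivity
  have hε0 : 0 < ε := by have := lt_min hγβ hd; positivity
  have hε1 : 100 * ε ≤ γ * β := by have := min_le_left (γ * β) d; linarith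
  have hε2 : 100 * ε ≤ d := by have := min_le_right (γ * β) d; linarith
  have hε3 : 4 * ε ≤ γ := by nlinarith
  obtain ⟨C, hC⟩ := hS ε hε0
  have hprod := fun s => aux_prod (f s) (ns s) γ ε C hε0.le hε3 (hC s)
  set T := ∑' n : ℤ, Real.exp (-(γ / 4) * |(n : ℝ)|) with hT
  -- lower bound
  have hlow : ∀ p : ℤ, ∃ s, 1 ≤ |f s p| * (4 * C ^ 2 * T ^ 2 * Real.exp (2 * ε * |(p : ℝ)|)) := by
    intro p
    by_contra hcon
    push Not at hcon
    set D := C ^ 2 * Real.exp (2 * ε * |(p : ℝ)|) with hD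
    have hD0 : 0 ≤ D := by positivity
    have hT0 : 0 ≤ T := tsum_nonneg (fun _ => (Real.exp_pos _).le)
    have gen : ∀ A, 0 ≤ A → (∀ s, |f s p| ≤ A) → 1 ≤ A * D * T ^ 2 := by
      intro A hA0 hA
      have := aux_lower f hcol hrow p A D (γ / 4) (by positivity) hA0 hD0 hA (fun s n => hprod s p n)
      have h2 := mul_le_mul this this zero_le_one (by positivity)
      have h3 : Real.sqrt (A * D) * Real.sqrt (A * D) = A * D := Real.mul_self_sqrt (by positivity)
      calc (1 : ℝ) = 1 * 1 := by ring
        _ ≤ _ := h2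
        _ = (Real.sqrt (A * D) * Real.sqrt (A * D)) * T ^ 2 := by rw [← hT]; ring
        _ = _ := by rw [h3]
    have hDT : 0 < D * T ^ 2 := by
      have h1 : ∀ s, |f s p| ≤ 1 := by
        intro s
        have := le_hasSum (hcol p) s (fun j _ => sq_nonneg _)
        exact (sq_le_one_iff_abs_le_one _).1 this
      have := gen 1 zero_le_one h1
      linarith
    have := gen (1 / (4 * (D * T ^ 2))) (by positivity) (fun s => by
      rw [le_div_iff₀ (by positivity)]
      have := hcon s
      have e : |f s p| * (4 * C ^ 2 * T ^ 2 * Real.exp (2 * ε * |(p : ℝ)|)) = |f s p| * (4 * (D * T ^ 2)) := by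
        rw [hD]; ring
      linarith)
    have e : 1 / (4 * (D * T ^ 2)) * D * T ^ 2 = 1 / 4 := by
      rw [mul_assoc]
      generalize D * T ^ 2 = y at *
      field_simp
    rw [e] at this
    norm_num at this
  -- per N inequality
  set Q := 4 * C ^ 2 * T ^ 2 with hQ
  have hQ0 : 0 ≤ Q := by positivity
  set K := Q ^ 2 * (B + C ^ 2 * Real.exp (2 * γ)) with hK
  have hmain : ∀ N : ℤ, (∀ m, |g (N - m) - g m| ≤ Real.exp (-d * |(N : ℝ)|)) →
      1 ≤ K * Real.exp (-ε * |(N : ℝ)|) := by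
    intro N hN
    set x := |(N : ℝ)| with hx
    have hx0 : 0 ≤ x := abs_nonneg _
    set k := ⌊β * x⌋₊ with hk
    have hk1 : (k : ℝ) ≤ β * x := Nat.floor_le (by positivity)
    have hk2 : β * x < k + 1 := Nat.lt_floor_add_one _
    set p : ℤ := N / 2 + k with hp
    obtain ⟨s, hs⟩ := hlow p
    obtain ⟨E, hEs⟩ := hE s
    set r := Real.exp (-(d / 2) * x) with hr
    have hr2 : r ^ 2 = Real.exp (-d * x) := by
      rw [hr, ← Real.exp_nat_mul]; congr 1; push_cast; ring
    have hr1 : r ≤ 1 := by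
      rw [hr, Real.exp_le_one_iff]; nlinarith
    obtain ⟨σ, hσ, hgr⟩ := aux_growth g M hM E (f s) hEs (hrow s) N r (Real.exp_pos _).le hr1
      (by rw [hr2]; exact hN)
    have h1 := hgr k
    rw [← hp, ← hB] at h1
    have h2 := hprod s p (N - p)
    have hf1 : |f s p| ≤ 1 := by
      have := le_hasSum (hcol p) s (fun j _ => sq_nonneg _)
      exact (sq_le_one_iff_abs_le_one _).1 this
    have hpabs : |(p : ℝ)| ≤ 2 * x := by
      have i1 : |N / 2| ≤ |N| := by
        rcases abs_cases (N / 2) with h | h <;> rcases abs_cases N with h' | h' <;> omega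
      have i2 : |((N / 2 : ℤ) : ℝ)| ≤ x := by rw [hx]; exact_mod_cast i1
      have : (p : ℝ) = ((N / 2 : ℤ) : ℝ) + k := by rw [hp]; push_cast; ring
      rw [this]
      have i3 : (k : ℝ) ≤ x := by nlinarith
      have i4 : |(k : ℝ)| = k := abs_of_nonneg (Nat.cast_nonneg k)
      exact (abs_add_le _ _).trans (by linarith)
    have hdist : 2 * β * x - 4 ≤ |((N - p : ℤ) : ℝ) - p| := by
      have i1 : 2 * (k : ℤ) - 1 ≤ |N - p - p| := by
        have := neg_abs_le (N - p - p)
        omega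
      have i2 : 2 * (k : ℝ) - 1 ≤ |((N - p : ℤ) : ℝ) - p| := by exact_mod_cast i1
      linarith
    -- combine
    have h3 : |f s p| ^ 2 ≤ B ^ (k + 1) * r + |f s p| * |f s (N - p)| := by
      have t : |f s p| ≤ |f s p + σ * f s (N - p)| + |f s (N - p)| := by
        have := abs_sub (f s p + σ * f s (N - p)) (σ * f s (N - p))
        rw [abs_mul, hσ, one_mul] at this
        simpa using this
      have t2 : |f s p| * |f s p + σ * f s (N - p)| ≤ B ^ (k + 1) * r := by
        calc _ ≤ 1 * (B ^ (k + 1) * r) := mul_le_mul hf1 h1 (abs_nonneg _) zero_le_one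
          _ = _ := one_mul _
      have t3 := mul_le_mul_of_nonneg_left t (abs_nonneg (f s p))
      rw [sq]
      linarith
    have h4 : B ^ (k + 1) * r ≤ B * Real.exp (-(d / 4) * x) := by
      have : B ^ k = Real.exp (k * b) := by rw [hBb, ← Real.exp_nat_mul]
      rw [pow_succ, this, hr, mul_comm (Real.exp _) B, mul_assoc, ← Real.exp_add]
      apply mul_le_mul_of_nonneg_left _ hB0.le
      apply Real.exp_le_exp.2
      have z1 := mul_le_mul_of_nonneg_right hk1 hb0.le
      have z2 := mul_le_mul_of_nonneg_right hβd hx0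
      linarith
    have h5 : |f s p| * |f s (N - p)| ≤ C ^ 2 * Real.exp (2 * γ) * Real.exp ((4 * ε - γ * β) * x) := by
      refine h2.trans ?_
      rw [mul_assoc (C ^ 2), mul_assoc (C ^ 2), ← Real.exp_add, ← Real.exp_add]
      apply mul_le_mul_of_nonneg_left _ (sq_nonneg C)
      apply Real.exp_le_exp.2
      have z1 := mul_le_mul_of_nonneg_left hpabs hε0.le
      have z2 := mul_le_mul_of_nonneg_left hdist hγ.le
      linarith
    have h6 : 1 ≤ |f s p| * (Q * Real.exp (4 * ε * x)) := by
      refine hs.trans ?_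
      apply mul_le_mul_of_nonneg_left _ (abs_nonneg _)
      apply mul_le_mul_of_nonneg_left _ hQ0
      apply Real.exp_le_exp.2
      have z1 := mul_le_mul_of_nonneg_left hpabs hε0.le
      linarith
    have h7 : 1 ≤ |f s p| ^ 2 * (Q ^ 2 * Real.exp (8 * ε * x)) := by
      have e : |f s p| ^ 2 * (Q ^ 2 * Real.exp (8 * ε * x)) = (|f s p| * (Q * Real.exp (4 * ε * x))) ^ 2 := by
        rw [show 8 * ε * x = 4 * ε * x + 4 * ε * x by ring, Real.exp_add]; ring
      rw [e]
      exact one_le_pow₀ h6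
    have h8 : |f s p| ^ 2 ≤ B * Real.exp (-(d / 4) * x) +
        C ^ 2 * Real.exp (2 * γ) * Real.exp ((4 * ε - γ * β) * x) := by linarith
    have h9 := mul_le_mul_of_nonneg_right h8 (show 0 ≤ Q ^ 2 * Real.exp (8 * ε * x) by positivity)
    refine h7.trans (h9.trans ?_)
    have y0 := mul_nonneg hε0.le hx0
    have y1 := mul_le_mul_of_nonneg_right hε1 hx0
    have y2 := mul_le_mul_of_nonneg_right hε2 hx0
    have e1 : Real.exp (-(d / 4) * x) * Real.exp (8 * ε * x) ≤ Real.exp (-ε * x) := by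
      rw [← Real.exp_add]; apply Real.exp_le_exp.2; linarith
    have e2 : Real.exp ((4 * ε - γ * β) * x) * Real.exp (8 * ε * x) ≤ Real.exp (-ε * x) := by
      rw [← Real.exp_add]; apply Real.exp_le_exp.2; linarith
    have f1 := mul_le_mul_of_nonneg_left e1 (show 0 ≤ Q ^ 2 * B by positivity)
    have f2 := mul_le_mul_of_nonneg_left e2 (show 0 ≤ Q ^ 2 * (C ^ 2 * Real.exp (2 * γ)) by positivity)
    rw [hK]
    linarith
  have htend : Tendsto (fun N : ℤ => |(N : ℝ)|) cofinite atTop := by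
    rw [Int.cofinite_eq]
    apply Tendsto.sup
    · exact tendsto_abs_atBot_atTop.comp (tendsto_intCast_atBot_iff.2 tendsto_id)
    · exact tendsto_abs_atTop_atTop.comp (tendsto_intCast_atTop_atTop)
  have hlim : Tendsto (fun N : ℤ => K * Real.exp (-ε * |(N : ℝ)|)) cofinite (nhds 0) := by
    have h := (Real.tendsto_exp_neg_atTop_nhds_zero.comp (htend.const_mul_atTop hε0)).const_mul K
    rw [mul_zero] at h
    refine h.congr (fun N => ?_)
    simp
  have hev := hlim.eventually (gt_mem_nhds (zero_lt_one))
  obtain ⟨N, hN1, hN2⟩ := (hfr.and_eventually hev).exists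
  linarith [hmain N hN1]

theorem no_SULE_of_deltaPot_pos
    (g : ℤ → ℝ) (hg : ∃ M : ℝ, ∀ n : ℤ, |g n| ≤ M)
    (hδ : 0 < deltaPot g) :
    ¬ HasSULE g := by
  rintro ⟨Φ, ns, γ, hγ, hE, hS⟩
  obtain ⟨d, hd, hfr⟩ := aux_freq g hg hδ
  obtain ⟨M, hM⟩ := hg
  refine aux_main g M hM d hd hfr (fun s n => Φ s n) ?_ ?_ hE ns γ hγ hS
  · intro p
    have h := Φ.hasSum_inner_mul_inner (lp.single 2 p (1 : ℝ)) (lp.single 2 p (1 : ℝ))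
    have e1 : ∀ v : lp (fun _ : ℤ => ℝ) 2, inner ℝ (lp.single 2 p (1 : ℝ)) v = v p := by
      intro v
      have := lp.inner_single_left (𝕜 := ℝ) p (1 : ℝ) v
      simpa using this
    have e2 : ∀ v : lp (fun _ : ℤ => ℝ) 2, inner ℝ v (lp.single 2 p (1 : ℝ)) = v p := by
      intro v
      rw [real_inner_comm, e1]
    have e3 : (lp.single 2 p (1 : ℝ) : lp (fun _ : ℤ => ℝ) 2) p = (1 : ℝ) := by simp
    rw [e1, e3] at h
    have e : (fun s => Φ s p ^ 2) = fun s => inner ℝ (lp.single 2 p (1 : ℝ)) (Φ s) * inner ℝ (Φ s) (lp.single 2 p (1 : ℝ)) := by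
      funext s
      rw [e1, e2, sq]
    show HasSum (fun s => Φ s p ^ 2) 1
    rw [e]
    exact h
  · intro s
    have h := lp.hasSum_inner (𝕜 := ℝ) (Φ s) (Φ s)
    have h1 : inner ℝ (Φ s) (Φ s) = (1 : ℝ) := by
      rw [real_inner_self_eq_norm_sq, Φ.orthonormal.1 s]; norm_num
    rw [h1] at h
    have e : (fun n => Φ s n ^ 2) = fun n => inner ℝ (Φ s n) (Φ s n) := by
      funext n
      simp [sq]
    show HasSum (fun n => Φ s n ^ 2) 1
    rw [e]
    exact h
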